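/- Let n and d be positive integers and μ, σ, γ > 0. Let (Z_{ij})_{i ∈ {1,…,n+1}, j ∈ {1,…,d}} be i.i.d. random variables each distributed as the Gaussian N(μ, σ²), i.e. the underlying measure is the product over (i,j) of the Gaussian measure N(μ, σ²) on ℝ. Define S_j = Σ_{i=1}^n Z_{ij} for j = 1,…,d, let θ ∈ ℝ^d have coordinates θ_j = γ·sign(S_j), and let Z* = (Z_{(n+1)1}, …, Z_{(n+1)d}) be the test point. Then E[⟨θ, S/n⟩ − ⟨θ, Z*⟩] = d·γ·σ·√(2/(nπ))·exp(−nμ²/(2σ²)). -/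

import Mathlib

open MeasureTheory ProbabilityTheory

/-- Sums of i.i.d. Gaussians are Gaussian. -/
lemma map_sum_gaussian {Ω ι : Type*} [MeasurableSpace Ω] {P : Measure Ω} [IsProbabilityMeasure P]
    {X : ι → Ω → ℝ} (hi : iIndepFun X P) (hm : ∀ i, Measurable (X i)) (m : ℝ) (v : NNReal)
    (hX : ∀ i, P.map (X i) = gaussianReal m v) (s : Finset ι) :
    P.map (∑ i ∈ s, X i) = gaussianReal (s.card * m) (s.card * v) := by
  classical
  induction s using Finset.induction_on with
  | empty =>
    have : (∑ i ∈ (∅ : Finset ι), X i) = fun _ => (0 : ℝ) := by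
      ext; simp
    rw [this]
    simp [Measure.map_const]
  | insert a s ha ih =>
    rw [Finset.sum_insert ha,
      gaussianReal_add_gaussianReal_of_indepFun (hi.indepFun_finsetSum_of_notMem hm ha).symm
        (hX a) ih, Finset.card_insert_of_notMem ha]
    push_cast
    congr 1 <;> ring

lemma measurable_realSign : Measurable Real.sign := by
  have : Real.sign = fun r : ℝ => if r < 0 then (-1 : ℝ) else if 0 < r then 1 else 0 := by
    ext r; simp [Real.sign]
  rw [this]
  exact Measurable.ite measurableSet_Iio measurable_const
    (Measurable.ite measurableSet_Ioi measurable_const measurable_const)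

lemma norm_realSign_le (x : ℝ) : ‖Real.sign x‖ ≤ 1 := by
  rcases Real.sign_apply_eq x with h | h | h <;> simp [h]

lemma integrable_id_gaussian (m : ℝ) (v : NNReal) :
    Integrable (fun x : ℝ => x) (gaussianReal m v) := by
  have := (memLp_id_gaussianReal (μ := m) (v := v) 1)
  exact memLp_one_iff_integrable.1 this

lemma tendsto_pdf (m : ℝ) (v : NNReal) (hv : v ≠ 0) (l : Filter ℝ)
    (hl : Filter.Tendsto (fun x : ℝ => (x - m) ^ 2) l Filter.atTop) :
    Filter.Tendsto (fun x => -(v : ℝ) * gaussianPDFReal m v x) l (nhds 0) := by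
  have hv' : (0 : ℝ) < v := by positivity
  have h1 : Filter.Tendsto (fun x : ℝ => Real.exp (-((x - m) ^ 2 / (2 * v)))) l (nhds 0) :=
    Real.tendsto_exp_neg_atTop_nhds_zero.comp (hl.atTop_div_const (by positivity))
  have h2 := h1.const_mul (-(v : ℝ) * (Real.sqrt (2 * Real.pi * v))⁻¹)
  rw [mul_zero] at h2
  refine h2.congr fun x => ?_
  simp only [gaussianPDFReal, neg_div]
  ring

lemma hasDerivAt_pdf (m : ℝ) (v : NNReal) (hv : v ≠ 0) (x : ℝ) :
    HasDerivAt (fun x => -(v : ℝ) * gaussianPDFReal m v x)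
      (gaussianPDFReal m v x * (x - m)) x := by
  have hv' : (v : ℝ) ≠ 0 := by positivity
  have h1 : HasDerivAt (fun x : ℝ => -(x - m) ^ 2 / (2 * v)) (-(2 * (x - m)) / (2 * v)) x := by
    have := ((((hasDerivAt_id x).sub_const m).pow 2).neg).div_const (2 * (v : ℝ))
    simpa using this
  have h2 := (h1.exp.const_mul ((Real.sqrt (2 * Real.pi * v))⁻¹)).const_mul (-(v : ℝ))
  refine (h2.congr_deriv ?_)
  simp only [gaussianPDFReal]
  field_simp

lemma integral_sign_gaussian (m : ℝ) (v : NNReal) (hv : v ≠ 0) :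
    ∫ x, Real.sign x * (x - m) ∂(gaussianReal m v) = 2 * v * gaussianPDFReal m v 0 := by
  rw [integral_gaussianReal_eq_integral_smul hv]
  have hint : Integrable (fun x : ℝ => gaussianPDFReal m v x * (x - m)) := by
    have h : Integrable (fun x : ℝ => x - m) (gaussianReal m v) :=
      (integrable_id_gaussian m v).sub (integrable_const m)
    rw [gaussianReal_of_var_ne_zero m hv,
      integrable_withDensity_iff_integrable_smul' (measurable_gaussianPDF m v)
        (ae_of_all _ fun _ => gaussianPDF_lt_top)] at h
    simpa [toReal_gaussianPDF] using h
  have hint2 : Integrable (fun x : ℝ => gaussianPDFReal m v x • (Real.sign x * (x - m))) := by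
    have := hint.bdd_mul (c := 1) measurable_realSign.aestronglyMeasurable
      (ae_of_all _ norm_realSign_le)
    refine this.congr (ae_of_all _ fun x => ?_)
    simp only [smul_eq_mul]; ring
  have htop : Filter.Tendsto (fun x : ℝ => (x - m) ^ 2) Filter.atTop Filter.atTop :=
    (Filter.tendsto_pow_atTop two_ne_zero).comp
      (Filter.tendsto_atTop_add_const_right _ (-m) Filter.tendsto_id)
  have hbot : Filter.Tendsto (fun x : ℝ => (x - m) ^ 2) Filter.atBot Filter.atTop := by
    have : Filter.Tendsto (fun x : ℝ => -x + m) Filter.atBot Filter.atTop :=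
      Filter.tendsto_atTop_add_const_right _ m Filter.tendsto_neg_atBot_atTop
    refine ((Filter.tendsto_pow_atTop two_ne_zero).comp this).congr fun x => ?_
    simp only [Function.comp]; ring
  have hI1 := integral_Ioi_of_hasDerivAt_of_tendsto' (a := 0)
    (fun x _ => hasDerivAt_pdf m v hv x) hint.integrableOn (tendsto_pdf m v hv _ htop)
  have hI2 := integral_Iic_of_hasDerivAt_of_tendsto' (a := 0)
    (fun x _ => hasDerivAt_pdf m v hv x) hint.integrableOn (tendsto_pdf m v hv _ hbot)
  rw [← integral_add_compl (measurableSet_Iic (a := (0:ℝ))) hint2, Set.compl_Iic]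
  have e1 : ∫ x in Set.Ioi (0:ℝ), gaussianPDFReal m v x • (Real.sign x * (x - m)) =
      ∫ x in Set.Ioi (0:ℝ), gaussianPDFReal m v x * (x - m) := by
    refine setIntegral_congr_fun measurableSet_Ioi fun x hx => ?_
    simp [Real.sign_of_pos hx]
  have e2 : ∫ x in Set.Iic (0:ℝ), gaussianPDFReal m v x • (Real.sign x * (x - m)) =
      -∫ x in Set.Iic (0:ℝ), gaussianPDFReal m v x * (x - m) := by
    rw [integral_Iic_eq_integral_Iio, integral_Iic_eq_integral_Iio, ← integral_neg]
    refine setIntegral_congr_fun measurableSet_Iio fun x hx => ?_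
    simp only [Real.sign_of_neg hx, smul_eq_mul]
    ring
  rw [e1, e2, hI1, hI2]
  ring

lemma coord_gap (n d : ℕ) (hn : 0 < n) (μ σ : ℝ) (hσ : 0 < σ) (v : NNReal)
    (hvc : (v : ℝ) = σ ^ 2) (j : Fin d) :
    let P := (Measure.pi fun _ : Fin (n + 1) × Fin d => gaussianReal μ v)
    let f := fun ω : Fin (n + 1) × Fin d → ℝ =>
      Real.sign (∑ i : Fin n, ω (i.castSucc, j)) *
        ((∑ i : Fin n, ω (i.castSucc, j)) / n - ω (Fin.last n, j))
    Integrable f P ∧ ∫ ω, f ω ∂P =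
      σ * Real.sqrt (2 / (n * Real.pi)) * Real.exp (-(n * μ ^ 2) / (2 * σ ^ 2)) := by
  intro P f
  have hv : v ≠ 0 := by
    intro h
    have : (v : ℝ) = 0 := by rw [h]; rfl
    rw [hvc] at this
    exact absurd this (by positivity)
  let X : Fin (n + 1) → (Fin (n + 1) × Fin d → ℝ) → ℝ := fun i ω => ω (i, j)
  have hXm : ∀ i, Measurable (X i) := fun i => measurable_pi_apply _
  have hind : iIndepFun X P := by
    have h0 : iIndepFun (fun (p : Fin (n + 1) × Fin d) (ω : Fin (n + 1) × Fin d → ℝ) => ω p) P :=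
      iIndepFun_pi (X := fun _ x => x) (fun _ => aemeasurable_id)
    exact h0.precomp (g := fun i : Fin (n + 1) => (i, j)) (fun a b h => (Prod.ext_iff.1 h).1)
  have hlaw : ∀ i, P.map (X i) = gaussianReal μ v := fun i =>
    (measurePreserving_eval (fun _ : Fin (n + 1) × Fin d => gaussianReal μ v) (i, j)).map_eq
  let s : Finset (Fin (n + 1)) := Finset.univ.map Fin.castSuccEmb
  have hs : s.card = n := by simp [s]
  have hlast : Fin.last n ∉ s := by simp [s, Fin.castSucc_ne_last]
  let S : (Fin (n + 1) × Fin d → ℝ) → ℝ := ∑ i ∈ s, X i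
  have hS : ∀ ω, S ω = ∑ i : Fin n, ω (i.castSucc, j) := by
    intro ω; simp [S, s, X]
  have hSm : Measurable S := by
    have := Finset.measurable_sum s fun i _ => hXm i
    simpa [S, Finset.sum_fn] using this
  have hSlaw : P.map S = gaussianReal (n * μ) (n * v) := by
    have := map_sum_gaussian hind hXm μ v hlaw s
    rwa [hs] at this
  have hSL : IndepFun S (X (Fin.last n)) P := hind.indepFun_finsetSum_of_notMem hXm hlast
  let L : (Fin (n + 1) × Fin d → ℝ) → ℝ := X (Fin.last n)
  have hLint : Integrable L P := by
    have := integrable_id_gaussian μ v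
    rw [← hlaw (Fin.last n)] at this
    exact this.comp_measurable (hXm _)
  have hSint : Integrable S P := by
    have := integrable_id_gaussian (n * μ) (n * v)
    rw [← hSlaw] at this
    exact this.comp_measurable hSm
  have hsm : Measurable fun ω => Real.sign (S ω) := measurable_realSign.comp hSm
  have hbd : ∀ g : (Fin (n + 1) × Fin d → ℝ) → ℝ, Integrable g P →
      Integrable (fun ω => Real.sign (S ω) * g ω) P := fun g hg =>
    hg.bdd_mul (c := 1) hsm.aestronglyMeasurable (ae_of_all _ fun ω => norm_realSign_le _)
  have hLE : ∫ ω, L ω ∂P = μ := by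
    have h := integral_map (μ := P) (hXm (Fin.last n)).aemeasurable
      (f := fun x : ℝ => x) measurable_id.aestronglyMeasurable
    rw [hlaw, integral_id_gaussianReal] at h
    exact h.symm
  have hprod : ∫ ω, Real.sign (S ω) * L ω ∂P = ∫ ω, Real.sign (S ω) * μ ∂P := by
    have h := (hSL.comp measurable_realSign measurable_id).integral_fun_mul_eq_mul_integral
      hsm.aestronglyMeasurable (hXm _).aestronglyMeasurable
    rw [integral_mul_const, ← hLE]
    exact h
  have hn' : (n : ℝ) ≠ 0 := by positivity
  have hf : f = fun ω => Real.sign (S ω) * (S ω / n) - Real.sign (S ω) * L ω := by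
    ext ω
    simp only [f, hS, L, X]
    ring
  have hi1 := hbd _ (hSint.div_const (n : ℝ))
  have hi2 := hbd _ hLint
  refine ⟨by rw [hf]; exact hi1.sub hi2, ?_⟩
  rw [hf, integral_sub hi1 hi2, hprod, ← integral_sub hi1 (hbd _ (integrable_const μ))]
  have e : ∀ ω, Real.sign (S ω) * (S ω / n) - Real.sign (S ω) * μ =
      (n : ℝ)⁻¹ * (Real.sign (S ω) * (S ω - n * μ)) := by
    intro ω; field_simp
  simp_rw [e]
  rw [integral_const_mul]
  have h := integral_map (μ := P) hSm.aemeasurable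
      (f := fun x : ℝ => Real.sign x * (x - n * μ))
      (measurable_realSign.mul (measurable_id.sub_const _)).aestronglyMeasurable
  rw [hSlaw, integral_sign_gaussian _ _ (by positivity)] at h
  rw [← h]
  simp only [gaussianPDFReal, NNReal.coe_mul, NNReal.coe_natCast, hvc]
  have e3 : -(0 - (n : ℝ) * μ) ^ 2 / (2 * (n * σ ^ 2)) = -(n * μ ^ 2) / (2 * σ ^ 2) := by
    field_simp; ring
  rw [e3]
  have hnp : (0 : ℝ) < n := by positivity
  have e4 : Real.sqrt (2 * Real.pi * (n * σ ^ 2)) = σ * Real.sqrt (2 * Real.pi * n) := by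
    rw [← mul_assoc, mul_comm, Real.sqrt_mul (by positivity), Real.sqrt_sq hσ.le]
  have e5 : Real.sqrt (2 / (n * Real.pi)) = 2 / Real.sqrt (2 * Real.pi * n) := by
    rw [Real.sqrt_eq_iff_mul_self_eq (by positivity) (by positivity), div_mul_div_comm,
      Real.mul_self_sqrt (by positivity)]
    field_simp
    try norm_num
  rw [e4, e5]
  have := Real.pi_pos
  field_simp


/-- Loss gap of the standard model: with `(Z_{ij})` i.i.d. `N(μ, σ²)` for
`i ∈ {1,…,n+1}`, `j ∈ {1,…,d}`, `S_j = ∑_{i=1}^n Z_{ij}`, `θ_j = γ·sign(S_j)` and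
test point `Z*_j = Z_{(n+1)j}`,
`E[⟨θ, S/n⟩ − ⟨θ, Z*⟩] = d·γ·σ·√(2/(nπ))·exp(−nμ²/(2σ²))`. -/
theorem standard_loss_gap (n d : ℕ) (hn : 0 < n) (hd : 0 < d)
    (μ σ γ : ℝ) (hμ : 0 < μ) (hσ : 0 < σ) (hγ : 0 < γ) :
    (∫ ω : Fin (n + 1) × Fin d → ℝ,
        ((∑ j : Fin d, (γ * Real.sign (∑ i : Fin n, ω (i.castSucc, j))) *
            ((∑ i : Fin n, ω (i.castSucc, j)) / n)) -
          ∑ j : Fin d, (γ * Real.sign (∑ i : Fin n, ω (i.castSucc, j))) * ω (Fin.last n, j))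
        ∂(Measure.pi fun _ : Fin (n + 1) × Fin d => gaussianReal μ ⟨σ ^ 2, sq_nonneg σ⟩))
      = d * γ * σ * Real.sqrt (2 / (n * Real.pi)) * Real.exp (-(n * μ ^ 2) / (2 * σ ^ 2)) := by
  have hc := fun j => coord_gap n d hn μ σ hσ ⟨σ ^ 2, sq_nonneg σ⟩ rfl j
  have e : ∀ ω : Fin (n + 1) × Fin d → ℝ,
      ((∑ j : Fin d, (γ * Real.sign (∑ i : Fin n, ω (i.castSucc, j))) *
            ((∑ i : Fin n, ω (i.castSucc, j)) / n)) -
          ∑ j : Fin d, (γ * Real.sign (∑ i : Fin n, ω (i.castSucc, j))) * ω (Fin.last n, j)) =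
      ∑ j : Fin d, γ * (Real.sign (∑ i : Fin n, ω (i.castSucc, j)) *
        ((∑ i : Fin n, ω (i.castSucc, j)) / n - ω (Fin.last n, j))) := by
    intro ω
    rw [← Finset.sum_sub_distrib]
    refine Finset.sum_congr rfl fun j _ => ?_
    ring
  simp_rw [e]
  rw [integral_finsetSum _ fun j _ => (hc j).1.const_mul γ]
  simp_rw [integral_const_mul]
  rw [Finset.sum_congr rfl fun j _ => congrArg (γ * ·) (hc j).2]
  simp only [Finset.sum_const, Finset.card_univ, Fintype.card_fin, nsmul_eq_mul]
  ring
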